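/- Let μ > 0 and let p : [0,∞) → ℝ^ℕ be a solution of the mean-field ODE system d/dt p_n(t) = 𝓛[p(t)]_n with p(t) ∈ V_μ for all t ≥ 0. Assume that the series E[p(t) − p*] = ∑_{n≥0} (p_n(t) − p*_n)²/p*_n together with its first and second termwise-differentiated series in t converge uniformly on compact subsets of [0,∞), so that t ↦ E[p(t) − p*] is twice differentiable with derivatives given termwise. Then for every t ≥ 0, d²/dt² E[p(t) − p*] ≥ −2·(d/dt E[p(t) − p*]). -/

import Mathlib

open Filter

/-- The poor-biased generator: `𝓛[p]_0 = p_1 - μ p_0` and, for `n ≥ 1`,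
`𝓛[p]_n = (n+1) p_{n+1} + μ p_{n-1} - (n+μ) p_n`. -/
noncomputable def gen (μ : ℝ) (p : ℕ → ℝ) : ℕ → ℝ
  | 0 => p 1 - μ * p 0
  | n + 1 => ((n : ℝ) + 2) * p (n + 2) + μ * p n - (((n : ℝ) + 1) + μ) * p (n + 1)

/-- `V_μ`: probability mass functions on `ℕ` with mean `μ`. -/
def memV (μ : ℝ) (p : ℕ → ℝ) : Prop :=
  (∀ n, 0 ≤ p n) ∧ (∑' n : ℕ, p n = 1) ∧ (∑' n : ℕ, (n : ℝ) * p n = μ)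

/-- The Poisson distribution with mean `μ`: `p*_n = μ^n e^{-μ} / n!`. -/
noncomputable def pstar (μ : ℝ) (n : ℕ) : ℝ := μ ^ n * Real.exp (-μ) / n.factorial

/-- The series `∑_n f n t` converges uniformly on compact subsets of `[0, ∞)`. -/
def UnifConvOnCompacts (f : ℕ → ℝ → ℝ) : Prop :=
  ∀ K : Set ℝ, K ⊆ Set.Ici 0 → IsCompact K →
    TendstoUniformlyOn (fun (m : ℕ) (t : ℝ) => ∑ n ∈ Finset.range m, f n t)
      (fun t => ∑' n : ℕ, f n t) atTop K

/-!
Write `p = p* (1 + x)`. In terms of `x` the ODE is `x' = L x` with `L` the generator of the M/M/∞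
queue, `E = ∑ p*ₙ xₙ²`, and summation by parts gives `E' = -2μ D` with `D = ∑ p*ₙ (xₙ₊₁ - xₙ)²`.
Since `Δ L = L Δ - Δ`, the sequence `eᵗ Δx` again satisfies `y' = L y`, so `e²ᵗ D`, and with it
`-e²ᵗ E'`, is nonincreasing.

Both dissipation statements are proved integrated over a time interval. The boundary term at `n`
is at most `n/2` times the `n`-th term of a convergent series, so it is small for infinitely many
`n`, because the harmonic series diverges; no further decay of `x` is needed.
-/

open scoped fwdDiff ENNReal Topology
open Set MeasureTheory

theorem frequently_succ_mul_lt_of_summable {a : ℕ → ℝ} (ha : Summable a) {δ : ℝ} (hδ : 0 < δ) :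
    ∃ᶠ n : ℕ in atTop, ((n : ℝ) + 1) * a n < δ := by
  intro hlarge
  simp only [not_lt] at hlarge
  have hharmonic : Summable fun n : ℕ => 1 / ((n + 1 : ℕ) : ℝ) := by
    refine Summable.of_norm_bounded_eventually_nat (ha.mul_left δ⁻¹) ?_
    filter_upwards [hlarge] with n hn
    rw [Real.norm_of_nonneg (by positivity), Nat.cast_succ, div_le_iff₀ (by positivity),
      mul_assoc, ← div_eq_inv_mul, one_le_div hδ]
    linarith
  exact Real.not_summable_one_div_natCast ((summable_nat_add_iff 1).1 hharmonic)

theorem le_of_monotone_of_frequently_le {α β : Type*} [Preorder α] [IsDirectedOrder α] [Nonempty α]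
    [Preorder β] {f : α → β} (hf : Monotone f) {c : β} (h : ∃ᶠ a in atTop, f a ≤ c) (a : α) :
    f a ≤ c := by
  obtain ⟨b, hbc, hab⟩ := (h.and_eventually (eventually_ge_atTop a)).exists
  exact (hf hab).trans hbc

theorem hasSum_of_tendsto_boundary_sub_sum {e g B : ℕ → ℝ} {μ L : ℝ} (hμ : 0 < μ)
    (he : Summable e) (hg : ∀ n, 0 ≤ g n) (hB_le : ∀ m : ℕ, B m ≤ ((m : ℝ) + 1) * e (m + 1) / 2)
    (hB_abs : ∀ m, |B m| ≤ μ * (e m + g m))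
    (hL : Tendsto (fun m => B m - μ * ∑ n ∈ Finset.range m, g n) atTop (𝓝 L)) :
    HasSum g (-L / μ) := by
  have hfreq : ∃ᶠ m in atTop, ∑ n ∈ Finset.range m, g n ≤ (2 - L) / μ := by
    have hsmall := frequently_succ_mul_lt_of_summable ((summable_nat_add_iff 1).2 he) two_pos
    refine (hsmall.and_eventually (hL.eventually_const_le (sub_one_lt L))).mono ?_
    rintro m ⟨hm, hLm⟩
    rw [le_div_iff₀' hμ]
    linarith [hB_le m]
  have hg_summable : Summable g :=
    summable_of_sum_range_le hg (le_of_monotone_of_frequently_le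
      ((Finset.sum_mono_set_of_nonneg hg).comp Finset.range_mono) hfreq)
  have hB_zero : Tendsto B atTop (𝓝 0) := by
    refine squeeze_zero_norm hB_abs ?_
    simpa using (he.tendsto_atTop_zero.add hg_summable.tendsto_atTop_zero).const_mul μ
  have hlim := hB_zero.sub (hg_summable.hasSum.tendsto_sum_nat.const_mul μ)
  have hL_eq : L = -(μ * ∑' n, g n) := by rw [tendsto_nhds_unique hL hlim, zero_sub]
  rw [hL_eq, neg_neg, mul_div_cancel_left₀ _ hμ.ne']
  exact hg_summable.hasSum

theorem hasDerivWithinAt_comp_add_const {f : ℝ → ℝ} {f' c t : ℝ} {s s' : Set ℝ}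
    (hf : HasDerivWithinAt f f' s' (t + c)) (h : MapsTo (· + c) s s') :
    HasDerivWithinAt (fun τ => f (τ + c)) f' s t := by
  have hcomp := hf.comp t ((hasDerivWithinAt_id t s).add_const c) h
  rwa [mul_one] at hcomp

theorem lintegral_Ioc_tsum_ofReal {f : ℕ → ℝ → ℝ} {a b S : ℝ} (hab : a ≤ b)
    (hf : ∀ n, ContinuousOn (f n) (Icc a b)) (hf_nonneg : ∀ n t, 0 ≤ f n t)
    (hS : HasSum (fun n => ∫ t in a..b, f n t) S) :
    ∫⁻ t in Ioc a b, ∑' n, ENNReal.ofReal (f n t) = ENNReal.ofReal S := by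
  have hint n : IntegrableOn (f n) (Ioc a b) :=
    (hf n).integrableOn_Icc.mono_set Ioc_subset_Icc_self
  rw [lintegral_tsum fun n => (hint n).aemeasurable.ennreal_ofReal, ← hS.tsum_eq,
    ENNReal.ofReal_tsum_of_nonneg
      (fun n => intervalIntegral.integral_nonneg hab fun t _ => hf_nonneg n t) hS.summable]
  congr! 2 with n
  rw [intervalIntegral.integral_of_le hab,
    ofReal_integral_eq_lintegral_ofReal (hint n) (ae_of_all _ (hf_nonneg n))]

section Poisson

variable {μ : ℝ}

theorem pstar_pos (hμ : 0 < μ) (n : ℕ) : 0 < pstar μ n := by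
  unfold pstar
  positivity

theorem succ_mul_pstar_succ (μ : ℝ) (n : ℕ) :
    ((n : ℝ) + 1) * pstar μ (n + 1) = μ * pstar μ n := by
  simp only [pstar, Nat.factorial_succ, Nat.cast_mul, Nat.cast_succ]
  field_simp
  ring

/-- The generator of the M/M/∞ queue with arrival rate `μ`: the action of `gen μ` on densities with
respect to `pstar μ`. For `n = 0` the truncated index `n - 1` is multiplied by `0`. -/
def densityGen (μ : ℝ) (x : ℕ → ℝ) (n : ℕ) : ℝ :=
  μ * Δ_[1] x n - n * (x n - x (n - 1))

theorem gen_pstar_mul (μ : ℝ) (x : ℕ → ℝ) (n : ℕ) :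
    gen μ (fun k => pstar μ k * x k) n = pstar μ n * densityGen μ x n := by
  cases n with
  | zero =>
    have h₁ := succ_mul_pstar_succ μ 0
    simp only [Nat.cast_zero, zero_add] at h₁
    simp only [gen, densityGen, fwdDiff, Nat.cast_zero, zero_add]
    linear_combination x 1 * h₁
  | succ n =>
    have h₁ := succ_mul_pstar_succ μ n
    have h₂ := succ_mul_pstar_succ μ (n + 1)
    simp only [gen, densityGen, fwdDiff, Nat.add_sub_cancel]
    push_cast at h₂ ⊢
    linear_combination x (n + 2) * h₂ - x n * h₁

theorem gen_div_pstar (hμ : 0 < μ) (p : ℕ → ℝ) (n : ℕ) :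
    gen μ p n / pstar μ n = densityGen μ (fun k => p k / pstar μ k) n := by
  rw [div_eq_iff (pstar_pos hμ n).ne', mul_comm, ← gen_pstar_mul]
  simp only [mul_div_cancel₀ _ (pstar_pos hμ _).ne']

theorem densityGen_sub_const (μ : ℝ) (x : ℕ → ℝ) (c : ℝ) :
    densityGen μ (fun n => x n - c) = densityGen μ x := by
  ext n
  simp only [densityGen, fwdDiff, sub_sub_sub_cancel_right]

theorem densityGen_smul (μ c : ℝ) (x : ℕ → ℝ) : densityGen μ (c • x) = c • densityGen μ x := by
  ext n
  simp only [densityGen, fwdDiff, Pi.smul_apply, smul_eq_mul]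
  ring

theorem fwdDiff_densityGen (μ : ℝ) (x : ℕ → ℝ) (n : ℕ) :
    Δ_[1] (densityGen μ x) n = densityGen μ (Δ_[1] x) n - Δ_[1] x n := by
  cases n with
  | zero =>
    simp only [densityGen, fwdDiff, Nat.cast_zero, Nat.cast_succ, Nat.add_sub_cancel]
    ring
  | succ n =>
    simp only [densityGen, fwdDiff, Nat.cast_succ, Nat.add_sub_cancel]
    ring

/-- The `n`-th term of the squared norm of `x` in `ℓ²(pstar μ)`. -/
noncomputable def weightedSq (μ : ℝ) (x : ℕ → ℝ) (n : ℕ) : ℝ := pstar μ n * x n ^ 2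

/-- The squared norm of `x` in `ℓ²(pstar μ)`, allowed to be infinite. -/
noncomputable def enormSq (μ : ℝ) (x : ℕ → ℝ) : ℝ≥0∞ := ∑' n, ENNReal.ofReal (weightedSq μ x n)

theorem weightedSq_nonneg (hμ : 0 < μ) (x : ℕ → ℝ) (n : ℕ) : 0 ≤ weightedSq μ x n :=
  mul_nonneg (pstar_pos hμ n).le (sq_nonneg _)

theorem weightedSq_smul (μ c : ℝ) (x : ℕ → ℝ) (n : ℕ) :
    weightedSq μ (c • x) n = c ^ 2 * weightedSq μ x n := by
  simp only [weightedSq, Pi.smul_apply, smul_eq_mul]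
  ring

theorem enormSq_smul (μ c : ℝ) (x : ℕ → ℝ) :
    enormSq μ (c • x) = ENNReal.ofReal (c ^ 2) * enormSq μ x := by
  simp only [enormSq, weightedSq_smul, ENNReal.ofReal_mul (sq_nonneg c), ENNReal.tsum_mul_left]

/-- The boundary term at `m` when `∑ pstar μ n * (x n * densityGen μ x n)` is summed by parts. -/
noncomputable def boundaryFlux (μ : ℝ) (x : ℕ → ℝ) (m : ℕ) : ℝ :=
  μ * pstar μ m * (x m * Δ_[1] x m)

theorem sum_range_succ_pstar_mul_densityGen (μ : ℝ) (x : ℕ → ℝ) (m : ℕ) :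
    ∑ n ∈ Finset.range (m + 1), pstar μ n * (x n * densityGen μ x n) =
      boundaryFlux μ x m - μ * ∑ n ∈ Finset.range m, weightedSq μ (Δ_[1] x) n := by
  induction m with
  | zero =>
    simp only [zero_add, Finset.sum_range_one, Finset.sum_range_zero, densityGen, boundaryFlux,
      Nat.cast_zero]
    ring
  | succ m ih =>
    rw [Finset.sum_range_succ, ih, Finset.sum_range_succ _ m]
    simp only [boundaryFlux, weightedSq, densityGen, fwdDiff, Nat.add_sub_cancel]
    push_cast
    linear_combination (-x (m + 1) * (x (m + 1) - x m)) * succ_mul_pstar_succ μ m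

theorem boundaryFlux_le (hμ : 0 < μ) (x : ℕ → ℝ) (m : ℕ) :
    boundaryFlux μ x m ≤ ((m : ℝ) + 1) * weightedSq μ x (m + 1) / 2 := by
  have hweight : 0 ≤ μ * pstar μ m := mul_nonneg hμ.le (pstar_pos hμ m).le
  calc boundaryFlux μ x m ≤ μ * pstar μ m * (x (m + 1) ^ 2 / 2) := by
        refine mul_le_mul_of_nonneg_left ?_ hweight
        simp only [fwdDiff]
        linarith [sq_nonneg (x m - x (m + 1)), sq_nonneg (x m)]
    _ = ((m : ℝ) + 1) * weightedSq μ x (m + 1) / 2 := by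
        rw [← succ_mul_pstar_succ, weightedSq]
        ring

theorem abs_boundaryFlux_le (hμ : 0 < μ) (x : ℕ → ℝ) (m : ℕ) :
    |boundaryFlux μ x m| ≤ μ * (weightedSq μ x m + weightedSq μ (Δ_[1] x) m) := by
  have hweight : 0 ≤ μ * pstar μ m := mul_nonneg hμ.le (pstar_pos hμ m).le
  have hprod : |x m * Δ_[1] x m| ≤ x m ^ 2 + Δ_[1] x m ^ 2 := by
    rw [abs_mul, ← sq_abs (x m), ← sq_abs (Δ_[1] x m)]
    nlinarith [sq_nonneg (|x m| - |Δ_[1] x m|), abs_nonneg (x m), abs_nonneg (Δ_[1] x m)]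
  calc |boundaryFlux μ x m| = μ * pstar μ m * |x m * Δ_[1] x m| := by
        rw [boundaryFlux, abs_mul, abs_of_nonneg hweight]
    _ ≤ μ * pstar μ m * (x m ^ 2 + Δ_[1] x m ^ 2) := mul_le_mul_of_nonneg_left hprod hweight
    _ = μ * (weightedSq μ x m + weightedSq μ (Δ_[1] x) m) := by
        simp only [weightedSq]
        ring

end Poisson

theorem continuousOn_weightedSq {μ : ℝ} {x : ℝ → ℕ → ℝ} {s : Set ℝ} {n : ℕ}
    (hx : ContinuousOn (fun t => x t n) s) : ContinuousOn (fun t => weightedSq μ (x t) n) s :=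
  (hx.pow 2).const_mul (pstar μ n)

/-- On the time set `s`, the density `x` solves the coordinatewise ODE `x' = densityGen μ x`. -/
def IsDensityFlow (μ : ℝ) (x : ℝ → ℕ → ℝ) (s : Set ℝ) : Prop :=
  ∀ t ∈ s, ∀ n, HasDerivWithinAt (fun τ => x τ n) (densityGen μ (x t) n) s t

namespace IsDensityFlow

variable {μ a b : ℝ} {x : ℝ → ℕ → ℝ} {s : Set ℝ}

theorem mono {s' : Set ℝ} (hx : IsDensityFlow μ x s) (h : s' ⊆ s) : IsDensityFlow μ x s' :=
  fun t ht n => (hx t (h ht) n).mono h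

theorem comp_add_const {s' : Set ℝ} {δ : ℝ} (hx : IsDensityFlow μ x s)
    (h : MapsTo (· + δ) s' s) : IsDensityFlow μ (fun t => x (t + δ)) s' := fun t ht n =>
  hasDerivWithinAt_comp_add_const (hx (t + δ) (h ht) n) h

theorem continuousOn (hx : IsDensityFlow μ x s) (n : ℕ) : ContinuousOn (fun t => x t n) s :=
  fun t ht => (hx t ht n).continuousWithinAt

theorem continuousOn_fwdDiff (hx : IsDensityFlow μ x s) (n : ℕ) :
    ContinuousOn (fun t => Δ_[1] (x t) n) s :=
  (hx.continuousOn (n + 1)).sub (hx.continuousOn n)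

theorem exp_smul_fwdDiff (hx : IsDensityFlow μ x s) (c : ℝ) :
    IsDensityFlow μ (fun t => Real.exp (t - c) • Δ_[1] (x t)) s := by
  intro t ht n
  have hexp := ((hasDerivWithinAt_id t s).sub_const c).exp
  have hdiff : HasDerivWithinAt (fun τ => Δ_[1] (x τ) n) (Δ_[1] (densityGen μ (x t)) n) s t :=
    (hx t ht (n + 1)).sub (hx t ht n)
  refine (hexp.mul hdiff).congr_deriv ?_
  rw [fwdDiff_densityGen, densityGen_smul, Pi.smul_apply, smul_eq_mul, id]
  ring

theorem intervalIntegrable_weightedSq (hx : IsDensityFlow μ x (Icc a b)) (hab : a ≤ b) (n : ℕ) :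
    IntervalIntegrable (fun t => weightedSq μ (x t) n) volume a b :=
  (continuousOn_weightedSq (hx.continuousOn n)).intervalIntegrable_of_Icc hab

theorem intervalIntegrable_weightedSq_fwdDiff (hx : IsDensityFlow μ x (Icc a b)) (hab : a ≤ b)
    (n : ℕ) : IntervalIntegrable (fun t => weightedSq μ (Δ_[1] (x t)) n) volume a b :=
  (continuousOn_weightedSq (hx.continuousOn_fwdDiff n)).intervalIntegrable_of_Icc hab

theorem intervalIntegrable_boundaryFlux (hx : IsDensityFlow μ x (Icc a b)) (hab : a ≤ b) (m : ℕ) :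
    IntervalIntegrable (fun t => boundaryFlux μ (x t) m) volume a b :=
  (((hx.continuousOn m).mul (hx.continuousOn_fwdDiff m)).const_mul _).intervalIntegrable_of_Icc hab

theorem hasDerivWithinAt_sum_weightedSq (hx : IsDensityFlow μ x s) {t : ℝ} (ht : t ∈ s) (m : ℕ) :
    HasDerivWithinAt (fun τ => ∑ n ∈ Finset.range (m + 1), weightedSq μ (x τ) n)
      (2 * (boundaryFlux μ (x t) m - μ * ∑ n ∈ Finset.range m, weightedSq μ (Δ_[1] (x t)) n))
      s t := by
  rw [← sum_range_succ_pstar_mul_densityGen, Finset.mul_sum]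
  refine HasDerivWithinAt.fun_sum fun n _ => ?_
  refine (((hx t ht n).pow 2).const_mul (pstar μ n)).congr_deriv ?_
  ring

theorem sum_weightedSq_sub (hx : IsDensityFlow μ x (Icc a b)) (hab : a ≤ b) (m : ℕ) :
    ∑ n ∈ Finset.range (m + 1), weightedSq μ (x b) n -
        ∑ n ∈ Finset.range (m + 1), weightedSq μ (x a) n =
      2 * ((∫ t in a..b, boundaryFlux μ (x t) m) -
        μ * ∑ n ∈ Finset.range m, ∫ t in a..b, weightedSq μ (Δ_[1] (x t)) n) := by
  have hgrad n := hx.intervalIntegrable_weightedSq_fwdDiff hab n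
  have hflux := hx.intervalIntegrable_boundaryFlux hab m
  have hgrad_sum : IntervalIntegrable
      (fun t => μ * ∑ n ∈ Finset.range m, weightedSq μ (Δ_[1] (x t)) n) volume a b :=
    (ContinuousOn.intervalIntegrable_of_Icc hab <|
      continuousOn_finsetSum _ fun n _ =>
        continuousOn_weightedSq (hx.continuousOn_fwdDiff n)).const_mul μ
  rw [← intervalIntegral.integral_finsetSum fun n _ => hgrad n,
    ← intervalIntegral.integral_const_mul, ← intervalIntegral.integral_sub hflux hgrad_sum,
    ← intervalIntegral.integral_const_mul, eq_comm]
  have hderiv t ht := hx.hasDerivWithinAt_sum_weightedSq (t := t) ht m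
  exact intervalIntegral.integral_eq_sub_of_hasDerivAt_of_le hab
    (fun t ht => (hderiv t ht).continuousWithinAt)
    (fun t ht => (hderiv t (Ioo_subset_Icc_self ht)).hasDerivAt (Icc_mem_nhds ht.1 ht.2))
    ((hflux.sub hgrad_sum).const_mul 2)

theorem integral_boundaryFlux_le (hμ : 0 < μ) (hx : IsDensityFlow μ x (Icc a b)) (hab : a ≤ b)
    (m : ℕ) : ∫ t in a..b, boundaryFlux μ (x t) m ≤
      ((m : ℝ) + 1) * (∫ t in a..b, weightedSq μ (x t) (m + 1)) / 2 := by
  rw [← intervalIntegral.integral_const_mul, ← intervalIntegral.integral_div]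
  exact intervalIntegral.integral_mono_on hab (hx.intervalIntegrable_boundaryFlux hab m)
    (((hx.intervalIntegrable_weightedSq hab (m + 1)).const_mul _).div_const 2)
    fun t _ => boundaryFlux_le hμ (x t) m

theorem abs_integral_boundaryFlux_le (hμ : 0 < μ) (hx : IsDensityFlow μ x (Icc a b)) (hab : a ≤ b)
    (m : ℕ) : |∫ t in a..b, boundaryFlux μ (x t) m| ≤
      μ * ((∫ t in a..b, weightedSq μ (x t) m) +
        ∫ t in a..b, weightedSq μ (Δ_[1] (x t)) m) := by
  have hsq := hx.intervalIntegrable_weightedSq hab m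
  have hgrad := hx.intervalIntegrable_weightedSq_fwdDiff hab m
  rw [← intervalIntegral.integral_add hsq hgrad, ← intervalIntegral.integral_const_mul]
  exact (intervalIntegral.abs_integral_le_integral_abs hab).trans
    (intervalIntegral.integral_mono_on hab (hx.intervalIntegrable_boundaryFlux hab m).abs
      ((hsq.add hgrad).const_mul μ) fun t _ => abs_boundaryFlux_le hμ (x t) m)

theorem enormSq_le (hμ : 0 < μ) (hx : IsDensityFlow μ x (Icc a b)) (hab : a ≤ b)
    (hint : Summable fun n => ∫ t in a..b, weightedSq μ (x t) n) :
    enormSq μ (x b) ≤ enormSq μ (x a) := by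
  refine ENNReal.le_of_forall_pos_le_add fun ε hε _ => ENNReal.tsum_le_of_sum_range_le ?_
  refine le_of_monotone_of_frequently_le
    ((Finset.sum_mono_set _).comp Finset.range_mono) ?_
  have hsmall := frequently_succ_mul_lt_of_summable ((summable_nat_add_iff 1).2 hint)
    (NNReal.coe_pos.2 hε)
  refine (tendsto_add_atTop_nat 1).frequently (hsmall.mono fun m hm => ?_)
  have hgrad : 0 ≤ μ * ∑ n ∈ Finset.range m, ∫ t in a..b, weightedSq μ (Δ_[1] (x t)) n :=
    mul_nonneg hμ.le (Finset.sum_nonneg fun n _ =>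
      intervalIntegral.integral_nonneg hab fun t _ => weightedSq_nonneg hμ _ n)
  have hpartial : ∑ n ∈ Finset.range (m + 1), weightedSq μ (x b) n ≤
      ∑ n ∈ Finset.range (m + 1), weightedSq μ (x a) n + ε := by
    linarith [hx.sum_weightedSq_sub hab m, hx.integral_boundaryFlux_le hμ hab m]
  calc ∑ n ∈ Finset.range (m + 1), ENNReal.ofReal (weightedSq μ (x b) n)
      ≤ ∑ n ∈ Finset.range (m + 1), ENNReal.ofReal (weightedSq μ (x a) n) + ε := by
        rw [← ENNReal.ofReal_sum_of_nonneg fun n _ => weightedSq_nonneg hμ _ n,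
          ← ENNReal.ofReal_sum_of_nonneg fun n _ => weightedSq_nonneg hμ _ n,
          ← ENNReal.ofReal_coe_nnreal]
        exact (ENNReal.ofReal_le_ofReal hpartial).trans ENNReal.ofReal_add_le
    _ ≤ enormSq μ (x a) + ε := by
        gcongr
        exact ENNReal.sum_le_tsum _

section Energy

variable {F : ℝ → ℝ}

theorem summable_integral_weightedSq (hμ : 0 < μ) (hx : IsDensityFlow μ x (Icc a b)) (hab : a ≤ b)
    (hF : ∀ t ∈ Icc a b, HasSum (weightedSq μ (x t)) (F t)) (hF_cont : ContinuousOn F (Icc a b)) :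
    Summable fun n => ∫ t in a..b, weightedSq μ (x t) n := by
  refine summable_of_sum_range_le (c := ∫ t in a..b, F t)
    (fun n => intervalIntegral.integral_nonneg hab fun t _ => weightedSq_nonneg hμ _ n) fun m => ?_
  have hpartial_cont :
      ContinuousOn (fun t => ∑ n ∈ Finset.range m, weightedSq μ (x t) n) (Icc a b) :=
    continuousOn_finsetSum _ fun n _ => continuousOn_weightedSq (hx.continuousOn n)
  rw [← intervalIntegral.integral_finsetSum fun n _ => hx.intervalIntegrable_weightedSq hab n]
  exact intervalIntegral.integral_mono_on hab (hpartial_cont.intervalIntegrable_of_Icc hab)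
    (hF_cont.intervalIntegrable_of_Icc hab)
    fun t ht => sum_le_hasSum _ (fun n _ => weightedSq_nonneg hμ _ n) (hF t ht)

theorem hasSum_integral_weightedSq_fwdDiff (hμ : 0 < μ) (hx : IsDensityFlow μ x (Icc a b))
    (hab : a ≤ b) (hF : ∀ t ∈ Icc a b, HasSum (weightedSq μ (x t)) (F t))
    (hF_cont : ContinuousOn F (Icc a b)) :
    HasSum (fun n => ∫ t in a..b, weightedSq μ (Δ_[1] (x t)) n) ((F a - F b) / (2 * μ)) := by
  have hpartial t (ht : t ∈ Icc a b) :=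
    (hF t ht).tendsto_sum_nat.comp (tendsto_add_atTop_nat 1)
  have hlim := ((hpartial b (right_mem_Icc.2 hab)).sub
    (hpartial a (left_mem_Icc.2 hab))).div_const 2
  have hsum := hasSum_of_tendsto_boundary_sub_sum hμ
    (hx.summable_integral_weightedSq hμ hab hF hF_cont)
    (fun n => intervalIntegral.integral_nonneg hab fun t _ => weightedSq_nonneg hμ (Δ_[1] (x t)) n)
    (hx.integral_boundaryFlux_le hμ hab) (hx.abs_integral_boundaryFlux_le hμ hab)
    (hlim.congr fun m => by
      rw [Function.comp_apply, Function.comp_apply, hx.sum_weightedSq_sub hab,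
        mul_div_cancel_left₀ _ two_ne_zero])
  convert hsum using 1
  field_simp
  ring

theorem lintegral_enormSq_fwdDiff (hμ : 0 < μ) (hx : IsDensityFlow μ x (Icc a b)) (hab : a ≤ b)
    (hF : ∀ t ∈ Icc a b, HasSum (weightedSq μ (x t)) (F t)) (hF_cont : ContinuousOn F (Icc a b)) :
    ∫⁻ t in Ioc a b, enormSq μ (Δ_[1] (x t)) = ENNReal.ofReal ((F a - F b) / (2 * μ)) :=
  lintegral_Ioc_tsum_ofReal hab (fun n => continuousOn_weightedSq (hx.continuousOn_fwdDiff n))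
    (fun n _ => weightedSq_nonneg hμ _ n)
    (hx.hasSum_integral_weightedSq_fwdDiff hμ hab hF hF_cont)

theorem enormSq_fwdDiff_le (hμ : 0 < μ) (hx : IsDensityFlow μ x (Icc a b)) (hab : a ≤ b)
    (hF : ∀ t ∈ Icc a b, HasSum (weightedSq μ (x t)) (F t)) (hF_cont : ContinuousOn F (Icc a b)) :
    ENNReal.ofReal (Real.exp (2 * (b - a))) * enormSq μ (Δ_[1] (x b)) ≤
      enormSq μ (Δ_[1] (x a)) := by
  have hy := hx.exp_smul_fwdDiff a
  have hint : Summable fun n =>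
      ∫ t in a..b, weightedSq μ (Real.exp (t - a) • Δ_[1] (x t)) n := by
    refine Summable.of_nonneg_of_le
      (fun n => intervalIntegral.integral_nonneg hab fun t _ => weightedSq_nonneg hμ _ n)
      (fun n => ?_) ((hx.hasSum_integral_weightedSq_fwdDiff hμ hab hF hF_cont).summable.mul_left
        (Real.exp (b - a) ^ 2))
    rw [← intervalIntegral.integral_const_mul]
    refine intervalIntegral.integral_mono_on hab (hy.intervalIntegrable_weightedSq hab n)
      ((hx.intervalIntegrable_weightedSq_fwdDiff hab n).const_mul _) fun t ht => ?_
    rw [weightedSq_smul]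
    gcongr
    exacts [weightedSq_nonneg hμ _ n, ht.2]
  simpa only [enormSq_smul, sub_self, Real.exp_zero, one_pow, ENNReal.ofReal_one, one_mul,
    ← Real.exp_nat_mul, Nat.cast_ofNat] using hy.enormSq_le hμ hab hint

theorem monotoneOn_exp_mul_comp_add_sub (hμ : 0 < μ) (hx : IsDensityFlow μ x (Ici 0))
    (hF : ∀ t ∈ Ici (0 : ℝ), HasSum (weightedSq μ (x t)) (F t)) (hF_cont : ContinuousOn F (Ici 0))
    {δ : ℝ} (hδ : 0 ≤ δ) :
    MonotoneOn (fun t => Real.exp (2 * δ) * F (t + δ) - F t) (Ici 0) := by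
  intro a (ha : 0 ≤ a) b _ hab
  have hsub {c d : ℝ} (hc : 0 ≤ c) : Icc c d ⊆ Ici 0 := fun t ht => hc.trans ht.1
  have hshift : MapsTo (· + δ) (Icc a b) (Ici 0) := fun t ht => add_nonneg (ha.trans ht.1) hδ
  have hx_ab := hx.mono (hsub (d := b) ha)
  have hF_ab t (ht : t ∈ Icc a b) := hF t (hsub ha ht)
  have hdrop := hx_ab.lintegral_enormSq_fwdDiff hμ hab hF_ab (hF_cont.mono (hsub ha))
  have hdrop_shift := (hx.comp_add_const hshift).lintegral_enormSq_fwdDiff hμ hab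
    (fun t ht => hF (t + δ) (hshift ht)) (hF_cont.comp (by fun_prop) hshift)
  have hcontract : ENNReal.ofReal (Real.exp (2 * δ) * ((F (a + δ) - F (b + δ)) / (2 * μ))) ≤
      ENNReal.ofReal ((F a - F b) / (2 * μ)) := by
    rw [ENNReal.ofReal_mul (Real.exp_pos _).le, ← hdrop, ← hdrop_shift,
      ← lintegral_const_mul' _ _ ENNReal.ofReal_ne_top]
    refine setLIntegral_mono' measurableSet_Ioc fun t ht => ?_
    have ht0 : 0 ≤ t := ha.trans ht.1.le
    simpa only [add_sub_cancel_left] using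
      (hx.mono (hsub (d := t + δ) ht0)).enormSq_fwdDiff_le hμ (le_add_of_nonneg_right hδ)
        (fun τ hτ => hF τ (hsub ht0 hτ)) (hF_cont.mono (hsub ht0))
  have hdrop_nonneg : 0 ≤ (F a - F b) / (2 * μ) :=
    (hx_ab.hasSum_integral_weightedSq_fwdDiff hμ hab hF_ab (hF_cont.mono (hsub ha))).nonneg
      fun n => intervalIntegral.integral_nonneg hab fun t _ => weightedSq_nonneg hμ _ n
  rw [ENNReal.ofReal_le_ofReal_iff hdrop_nonneg, ← mul_div_assoc,
    div_le_div_iff_of_pos_right (by positivity)] at hcontract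
  dsimp only
  linarith

theorem monotoneOn_exp_mul_deriv (hμ : 0 < μ) (hx : IsDensityFlow μ x (Ici 0))
    (hF : ∀ t ∈ Ici (0 : ℝ), HasSum (weightedSq μ (x t)) (F t)) {F₁ : ℝ → ℝ}
    (hF₁ : ∀ t ∈ Ici (0 : ℝ), HasDerivWithinAt F (F₁ t) (Ici 0) t) :
    MonotoneOn (fun t => Real.exp (2 * t) * F₁ t) (Ici 0) := by
  intro a (ha : 0 ≤ a) b (hb : 0 ≤ b) hab
  have hδ : 0 ≤ b - a := sub_nonneg.2 hab
  have hshift : MapsTo (· + (b - a)) (Ici 0) (Ici 0) := fun t ht => add_nonneg ht hδ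
  have hF₁_shift : HasDerivWithinAt (fun t => F (t + (b - a))) (F₁ b) (Ici 0) a :=
    hasDerivWithinAt_comp_add_const (by simpa only [add_sub_cancel] using hF₁ b hb) hshift
  have hderiv_nonneg : 0 ≤ Real.exp (2 * (b - a)) * F₁ b - F₁ a :=
    ((hF₁_shift.const_mul _).sub (hF₁ a ha)).nonneg_of_monotoneOn
      (uniqueDiffWithinAt_iff_accPt.1 (uniqueDiffOn_Ici 0 a ha))
      (hx.monotoneOn_exp_mul_comp_add_sub hμ hF
        (fun t ht => (hF₁ t ht).continuousWithinAt) hδ)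
  calc Real.exp (2 * a) * F₁ a ≤ Real.exp (2 * a) * (Real.exp (2 * (b - a)) * F₁ b) := by
        gcongr
        linarith
    _ = Real.exp (2 * b) * F₁ b := by
        rw [← mul_assoc, ← Real.exp_add]
        ring_nf

theorem neg_two_mul_deriv_le (hμ : 0 < μ) (hx : IsDensityFlow μ x (Ici 0))
    (hF : ∀ t ∈ Ici (0 : ℝ), HasSum (weightedSq μ (x t)) (F t)) {F₁ F₂ : ℝ → ℝ}
    (hF₁ : ∀ t ∈ Ici (0 : ℝ), HasDerivWithinAt F (F₁ t) (Ici 0) t)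
    (hF₂ : ∀ t ∈ Ici (0 : ℝ), HasDerivWithinAt F₁ (F₂ t) (Ici 0) t) {t : ℝ} (ht : 0 ≤ t) :
    -2 * F₁ t ≤ F₂ t := by
  have hexp := ((hasDerivWithinAt_id t (Ici 0)).const_mul 2).exp
  have hderiv_nonneg := (hexp.mul (hF₂ t ht)).nonneg_of_monotoneOn
    (uniqueDiffWithinAt_iff_accPt.1 (uniqueDiffOn_Ici 0 t ht))
    (hx.monotoneOn_exp_mul_deriv hμ hF hF₁)
  have hfactor : 0 ≤ Real.exp (2 * t) * (2 * F₁ t + F₂ t) := by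
    simp only [id] at hderiv_nonneg
    linarith
  linarith [nonneg_of_mul_nonneg_right hfactor (Real.exp_pos _)]

end Energy

end IsDensityFlow

theorem isDensityFlow_div_pstar_sub_one {μ : ℝ} (hμ : 0 < μ) {p : ℝ → ℕ → ℝ} {s : Set ℝ}
    (hode : ∀ t ∈ s, ∀ n, HasDerivWithinAt (fun τ => p τ n) (gen μ (p t) n) s t) :
    IsDensityFlow μ (fun t n => p t n / pstar μ n - 1) s := by
  intro t ht n
  rw [densityGen_sub_const, ← gen_div_pstar hμ]
  exact ((hode t ht n).div_const _).sub_const 1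

theorem weightedSq_div_pstar_sub_one {μ : ℝ} (hμ : 0 < μ) (q : ℕ → ℝ) :
    weightedSq μ (fun n => q n / pstar μ n - 1) =
      fun n => (q n - pstar μ n) ^ 2 / pstar μ n := by
  ext n
  have := (pstar_pos hμ n).ne'
  rw [weightedSq]
  field_simp

theorem energy_convexity_general (μ : ℝ) (hμ : 0 < μ) (p : ℝ → ℕ → ℝ)
    (hode : ∀ t ∈ Ici (0 : ℝ), ∀ n : ℕ,
      HasDerivWithinAt (fun s => p s n) (gen μ (p t) n) (Ici 0) t)
    (hE : ∀ t ∈ Ici (0 : ℝ), Summable fun n => (p t n - pstar μ n) ^ 2 / pstar μ n)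
    (E₁ E₂ : ℝ → ℝ)
    (hE₁ : ∀ t ∈ Ici (0 : ℝ),
      HasDerivWithinAt (fun s => ∑' n : ℕ, (p s n - pstar μ n) ^ 2 / pstar μ n)
        (E₁ t) (Ici 0) t)
    (hE₂ : ∀ t ∈ Ici (0 : ℝ), HasDerivWithinAt E₁ (E₂ t) (Ici 0) t) :
    ∀ t ∈ Ici (0 : ℝ), E₂ t ≥ -2 * E₁ t := fun _ ht =>
  (isDensityFlow_div_pstar_sub_one hμ hode).neg_two_mul_deriv_le hμ
    (fun t ht => by simpa only [weightedSq_div_pstar_sub_one hμ] using (hE t ht).hasSum) hE₁ hE₂ ht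

theorem UnifConvOnCompacts.tendsto_sum_range {f : ℕ → ℝ → ℝ} (hf : UnifConvOnCompacts f) {t : ℝ}
    (ht : 0 ≤ t) : Tendsto (fun m => ∑ n ∈ Finset.range m, f n t) atTop (𝓝 (∑' n, f n t)) :=
  (hf {t} (singleton_subset_iff.2 ht) isCompact_singleton).tendsto_at (mem_singleton t)

theorem UnifConvOnCompacts.summable {f : ℕ → ℝ → ℝ} (hf : UnifConvOnCompacts f) {t : ℝ}
    (ht : 0 ≤ t) (hf_nonneg : ∀ n, 0 ≤ f n t) : Summable fun n => f n t :=
  summable_of_sum_range_le hf_nonneg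
    (((Finset.sum_mono_set_of_nonneg hf_nonneg).comp Finset.range_mono).ge_of_tendsto
      (hf.tendsto_sum_range ht))

/-- Bakry–Émery-type convexity: `d²/dt² E[p(t) - p*] ≥ -2 d/dt E[p(t) - p*]`,
where `E[q] = ∑_n q_n² / p*_n`. The uniform-convergence hypotheses on the energy series
and its first and second termwise-differentiated series guarantee that `t ↦ E[p(t) - p*]`
is twice differentiable with derivatives given termwise; `E₁` and `E₂` denote its first
and second derivatives on `[0, ∞)`. -/
theorem energy_convexity (μ : ℝ) (hμ : 0 < μ) (p : ℝ → ℕ → ℝ)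
    (hode : ∀ t ∈ Set.Ici (0 : ℝ), ∀ n : ℕ,
      HasDerivWithinAt (fun s => p s n) (gen μ (p t) n) (Set.Ici 0) t)
    (hV : ∀ t ∈ Set.Ici (0 : ℝ), memV μ (p t))
    (hunifE : UnifConvOnCompacts (fun n t => (p t n - pstar μ n) ^ 2 / pstar μ n))
    (hunifE' : UnifConvOnCompacts
      (fun n t => 2 * (p t n - pstar μ n) * gen μ (p t) n / pstar μ n))
    (hunifE'' : UnifConvOnCompacts
      (fun n t => 2 * ((gen μ (p t) n) ^ 2 + (p t n - pstar μ n) * gen μ (gen μ (p t)) n)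
        / pstar μ n)) :
    ∀ E₁ E₂ : ℝ → ℝ,
      (∀ t ∈ Set.Ici (0 : ℝ),
        HasDerivWithinAt (fun s => ∑' n : ℕ, (p s n - pstar μ n) ^ 2 / pstar μ n)
          (E₁ t) (Set.Ici 0) t) →
      (∀ t ∈ Set.Ici (0 : ℝ), HasDerivWithinAt E₁ (E₂ t) (Set.Ici 0) t) →
      ∀ t ∈ Set.Ici (0 : ℝ), E₂ t ≥ -2 * E₁ t := by
  intro E₁ E₂ hE₁ hE₂
  exact energy_convexity_general μ hμ p hode (fun t ht => hunifE.summable ht fun n =>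
    div_nonneg (sq_nonneg _) (pstar_pos hμ n).le) E₁ E₂ hE₁ hE₂
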